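/- Let H = (F, θ₀, θ₁, θ₂) be a connected orientable combinatorial hypermap and let A ⊆ E(H), with A^c = E(H) ∖ A. Then ε(H^A), ε(A) and ε(A^c) are all even, and the orientable genera γ(H^A) = ε(H^A)/2, γ(A) = ε(A)/2, γ(A^c) = ε(A^c)/2 satisfy γ(H^A) = γ(A) + γ(A^c) + c(H) − c(A) − c(A^c) + v(H). -/

import Mathlib

open Classical

/-- A pre-hypermap on a set of flags `F`: three structure maps `θ₀, θ₁, θ₂`.
It is a genuine combinatorial hypermap when the three maps are
fixed-point-free involutions (see `PreHypermap.IsHypermap`). -/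
structure PreHypermap (F : Type*) where
  theta : Fin 3 → F → F

namespace PreHypermap

variable {F : Type*}

/-- `H` is a combinatorial hypermap: `θ₀, θ₁, θ₂` are fixed-point-free involutions. -/
def IsHypermap (H : PreHypermap F) : Prop :=
  ∀ i : Fin 3, Function.Involutive (H.theta i) ∧ ∀ x : F, H.theta i x ≠ x

/-- The equivalence relation on `F` generated by a set of functions `F → F`;
for a set of involutions, two flags are related iff they are in the same orbit
of the subgroup generated by those involutions. -/
def orbitRel (fs : Set (F → F)) : F → F → Prop :=
  Relation.EqvGen (fun x y => ∃ f ∈ fs, f x = y)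

/-- The setoid of orbits of the subgroup generated by a set of involutions. -/
def orbitSetoid (fs : Set (F → F)) : Setoid F :=
  Relation.EqvGen.setoid (fun x y => ∃ f ∈ fs, f x = y)

/-- The number of orbits on `F` of the subgroup generated by a set of involutions. -/
noncomputable def orbitCount (fs : Set (F → F)) : ℕ :=
  Nat.card (Quotient (orbitSetoid fs))

/-- `v H`: the number of vertices, i.e. orbits of `⟨θ₁, θ₂⟩`. -/
noncomputable def v (H : PreHypermap F) : ℕ := orbitCount {H.theta 1, H.theta 2}

/-- `e H`: the number of hyperedges, i.e. orbits of `⟨θ₀, θ₂⟩`. -/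
noncomputable def e (H : PreHypermap F) : ℕ := orbitCount {H.theta 0, H.theta 2}

/-- `f H`: the number of faces, i.e. orbits of `⟨θ₀, θ₁⟩`. -/
noncomputable def f (H : PreHypermap F) : ℕ := orbitCount {H.theta 0, H.theta 1}

/-- `c H`: the number of components, i.e. orbits of `⟨θ₀, θ₁, θ₂⟩`. -/
noncomputable def c (H : PreHypermap F) : ℕ :=
  orbitCount {H.theta 0, H.theta 1, H.theta 2}

/-- `H` is connected if it has exactly one component. -/
def Connected (H : PreHypermap F) : Prop := H.c = 1

/-- The Euler characteristic `χ(H) = v + e + f - |F|/2`. -/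
noncomputable def chi (H : PreHypermap F) : ℤ :=
  (H.v : ℤ) + (H.e : ℤ) + (H.f : ℤ) - (Nat.card F : ℤ) / 2

/-- The Euler genus `ε(H) = 2 c(H) - χ(H)`. -/
noncomputable def eulerGenus (H : PreHypermap F) : ℤ := 2 * (H.c : ℤ) - H.chi

/-- `H` is orientable: there is `o : F → {+1, -1}` with `o (θᵢ x) = - o x` for all `i, x`. -/
def Orientable (H : PreHypermap F) : Prop :=
  ∃ o : F → ℤ, (∀ x : F, o x = 1 ∨ o x = -1) ∧
    ∀ (i : Fin 3) (x : F), o (H.theta i x) = - o x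

/-- The set `E(H)` of hyperedges of `H`, each hyperedge being its set of flags
(an orbit of `⟨θ₀, θ₂⟩`). -/
def edges (H : PreHypermap F) : Set (Set F) :=
  {s : Set F | ∃ x : F, s = {y : F | orbitRel {H.theta 0, H.theta 2} x y}}

/-- The geometric dual `H* = (F, θ₂, θ₁, θ₀)`. -/
def dual (H : PreHypermap F) : PreHypermap F where
  theta := fun i => H.theta (2 - i)

/-- The partial dual of `H` with respect to a set `S` of flags (interchange `θ₀` and
`θ₂` on `S`); for `A ⊆ E(H)` the partial dual `H^A` is `H.pdual (⋃₀ A)`. -/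
noncomputable def pdual (H : PreHypermap F) (S : Set F) : PreHypermap F where
  theta := fun i x =>
    if i = 1 then H.theta 1 x
    else if x ∈ S then H.theta (2 - i) x else H.theta i x

/-- `f(A)` for `A ⊆ E(H)`: the number of orbits of `⟨θ₁, θ₂^A⟩` (which equals `v(H^A)`). -/
noncomputable def subf (H : PreHypermap F) (A : Set (Set F)) : ℕ :=
  (H.pdual (⋃₀ A)).v

/-- `c(A)` for `A ⊆ E(H)`: the number of orbits of the subgroup generated by `θ₁`, `θ₂`
and the permutation equal to `θ₀` on `S(A)` and the identity elsewhere. -/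
noncomputable def subc (H : PreHypermap F) (A : Set (Set F)) : ℕ :=
  orbitCount {H.theta 1, H.theta 2, fun x => if x ∈ ⋃₀ A then H.theta 0 x else x}

/-- `χ(A) = v(A) + e(A) + f(A) - |S(A)|/2` for `A ⊆ E(H)`, where `v(A) = v(H)`,
`e(A) = |A|`, `f(A) = v(H^A)` and `S(A) = ⋃₀ A`. -/
noncomputable def subchi (H : PreHypermap F) (A : Set (Set F)) : ℤ :=
  (H.v : ℤ) + (A.ncard : ℤ) + (H.subf A : ℤ) - ((⋃₀ A).ncard : ℤ) / 2

/-- `ε(A) = 2 c(A) - χ(A)` for `A ⊆ E(H)`. -/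
noncomputable def subeps (H : PreHypermap F) (A : Set (Set F)) : ℤ :=
  2 * (H.subc A : ℤ) - H.subchi A

/-- The hyperedge set of `H` as a finset. -/
noncomputable def edgeFinset (H : PreHypermap F) [Fintype F] : Finset (Set F) :=
  (Set.toFinite H.edges).toFinset

/-- The partial-dual Euler-genus polynomial `∂ε_H(z) = Σ_{A ⊆ E(H)} z^(ε(H^A))`. -/
noncomputable def pdPoly (H : PreHypermap F) [Fintype F] : Polynomial ℕ :=
  ∑ A ∈ H.edgeFinset.powerset,
    Polynomial.X ^ ((H.pdual (⋃₀ (A : Set (Set F)))).eulerGenus).toNat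

/-- The partial-dual orientable-genus polynomial `∂Γ_H(z) = Σ_{A ⊆ E(H)} z^(ε(H^A)/2)`. -/
noncomputable def pdGammaPoly (H : PreHypermap F) [Fintype F] : Polynomial ℕ :=
  ∑ A ∈ H.edgeFinset.powerset,
    Polynomial.X ^ (((H.pdual (⋃₀ (A : Set (Set F)))).eulerGenus) / 2).toNat

/-- The join `H₁ ∨ H₂` of two hypermaps on disjoint flag sets, joining the corner
`{x, θ₁ x}` of `H₁` to the corner `{y, θ₁′ y}` of `H₂`. -/
noncomputable def join {F₁ F₂ : Type*} (H₁ : PreHypermap F₁) (H₂ : PreHypermap F₂)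
    (x : F₁) (y : F₂) : PreHypermap (F₁ ⊕ F₂) where
  theta := fun i z =>
    if i = 1 then
      if z = Sum.inl x then Sum.inr y
      else if z = Sum.inr y then Sum.inl x
      else if z = Sum.inl (H₁.theta 1 x) then Sum.inr (H₂.theta 1 y)
      else if z = Sum.inr (H₂.theta 1 y) then Sum.inl (H₁.theta 1 x)
      else Sum.map (H₁.theta 1) (H₂.theta 1) z
    else Sum.map (H₁.theta i) (H₂.theta i) z

/-- The bar-amalgamation `H₁ ⊕ H₂` of two hypermaps on disjoint flag sets, with a new
connecting hyperedge `{p, q, p', q'} = Fin 4` meeting the corner `{x, θ₁ x}` of `H₁`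
and the corner `{y, θ₁′ y}` of `H₂`. -/
noncomputable def bar {F₁ F₂ : Type*} (H₁ : PreHypermap F₁) (H₂ : PreHypermap F₂)
    (x : F₁) (y : F₂) : PreHypermap ((F₁ ⊕ F₂) ⊕ Fin 4) where
  theta := fun i z =>
    if i = 0 then
      match z with
      | .inl (.inl a) => .inl (.inl (H₁.theta 0 a))
      | .inl (.inr b) => .inl (.inr (H₂.theta 0 b))
      | .inr k => .inr (Equiv.swap (0 : Fin 4) 2 (Equiv.swap (1 : Fin 4) 3 k))
    else if i = 2 then
      match z with
      | .inl (.inl a) => .inl (.inl (H₁.theta 2 a))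
      | .inl (.inr b) => .inl (.inr (H₂.theta 2 b))
      | .inr k => .inr (Equiv.swap (0 : Fin 4) 1 (Equiv.swap (2 : Fin 4) 3 k))
    else
      if z = .inl (.inl x) then .inr 0
      else if z = .inr 0 then .inl (.inl x)
      else if z = .inl (.inl (H₁.theta 1 x)) then .inr 1
      else if z = .inr 1 then .inl (.inl (H₁.theta 1 x))
      else if z = .inl (.inr y) then .inr 2
      else if z = .inr 2 then .inl (.inr y)
      else if z = .inl (.inr (H₂.theta 1 y)) then .inr 3
      else if z = .inr 3 then .inl (.inr (H₂.theta 1 y))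
      else
        match z with
        | .inl (.inl a) => .inl (.inl (H₁.theta 1 a))
        | .inl (.inr b) => .inl (.inr (H₂.theta 1 b))
        | .inr k => .inr k

end PreHypermap

/-!
Three orientation-reversing involutions `a`, `b`, `c` induce permutations `ab`, `bc`, `ca` of the
positive flags whose product is `1`. The cycles of `ab` correspond to the orbits of `⟨a, b⟩`, so
comparing signs determines the parity of the total number of orbits; applied to `θ₀`, `θ₁`, `θ₂`,
this says that every orientable hypermap has even Euler genus. Partial duality preserves
orientability. The spanning sub-hypermap of `A` becomes an orientable hypermap on all flags once
`θ₀` is replaced by `θ₂` outside `S(A)`: each new hyperedge has two flags and hence contributes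
`1 - 2/2 = 0` to the Euler characteristic, so `ε(A)` is the Euler genus of that hypermap.

The genus formula is then a count: `H^A` has the hyperedges and components of `H`, its vertices are
counted by `f(A)` and its faces by `f(A^c)`.
-/

namespace PreHypermap

section Orbits

variable {F : Type*} {fs gs : Set (F → F)} {T : Set F}

/-- Stability of a set `T` of flags under every map in `fs`, in both directions, so that `T` is a
union of orbits. -/
def IsInvariant (fs : Set (F → F)) (T : Set F) : Prop :=
  ∀ g ∈ fs, ∀ x, g x ∈ T ↔ x ∈ T

/-- The orbits of `fs` contained in `T`, each as its set of flags. -/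
def orbitsIn (fs : Set (F → F)) (T : Set F) : Set (Set F) :=
  {s ∈ (orbitSetoid fs).classes | s ⊆ T}

theorem IsInvariant.compl (hT : IsInvariant fs T) : IsInvariant fs Tᶜ :=
  fun g hg x => not_congr (hT g hg x)

theorem IsInvariant.mono (hT : IsInvariant gs T) (h : fs ⊆ gs) : IsInvariant fs T :=
  fun g hg => hT g (h hg)

theorem orbitSetoid_apply {g : F → F} (hg : g ∈ fs) (x : F) : orbitSetoid fs x (g x) :=
  .rel _ _ ⟨g, hg, rfl⟩

theorem orbitSetoid_le {r : Setoid F} (h : ∀ g ∈ fs, ∀ x, r x (g x)) : orbitSetoid fs ≤ r := by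
  rw [orbitSetoid, Setoid.eqvGen_eq]
  exact sInf_le fun x _ ⟨g, hg, hgx⟩ => hgx ▸ h g hg x

theorem IsInvariant.mem_iff_of_orbitSetoid (hT : IsInvariant fs T) {x y : F}
    (hxy : orbitSetoid fs x y) : x ∈ T ↔ y ∈ T :=
  have hle : orbitSetoid fs ≤ Setoid.ker (· ∈ T) :=
    orbitSetoid_le fun g hg x => propext (hT g hg x).symm
  iff_of_eq (hle hxy)

theorem orbitSetoid_of_forall_apply_on (hT : IsInvariant fs T)
    (h : ∀ g ∈ fs, ∀ x ∈ T, orbitSetoid gs x (g x)) {x y : F} (hxy : orbitSetoid fs x y)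
    (hx : x ∈ T) : orbitSetoid gs x y := by
  induction hxy with
  | rel x y hxy =>
    obtain ⟨g, hg, rfl⟩ := hxy
    exact h g hg x hx
  | refl x => exact .refl x
  | symm x y hxy ih => exact .symm _ _ (ih ((hT.mem_iff_of_orbitSetoid hxy).2 hx))
  | trans x y z hxy _ ih₁ ih₂ =>
    exact .trans _ _ _ (ih₁ hx) (ih₂ ((hT.mem_iff_of_orbitSetoid hxy).1 hx))

theorem orbitsIn_subset (hfs : IsInvariant fs T) (hgs : IsInvariant gs T)
    (h₁ : ∀ g ∈ fs, ∀ x ∈ T, orbitSetoid gs x (g x))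
    (h₂ : ∀ g ∈ gs, ∀ x ∈ T, orbitSetoid fs x (g x)) : orbitsIn fs T ⊆ orbitsIn gs T := by
  rintro _ ⟨⟨x, rfl⟩, hT⟩
  have hx : x ∈ T := hT (.refl x)
  have hclass : {y | orbitSetoid fs y x} = {y | orbitSetoid gs y x} := by
    ext y
    exact ⟨fun hy => orbitSetoid_of_forall_apply_on hfs h₁ hy (hT hy),
      fun hy => orbitSetoid_of_forall_apply_on hgs h₂ hy ((hgs.mem_iff_of_orbitSetoid hy).2 hx)⟩
  exact ⟨⟨x, hclass⟩, hT⟩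

theorem orbitsIn_congr (hfs : IsInvariant fs T) (hgs : IsInvariant gs T)
    (h₁ : ∀ g ∈ fs, ∀ x ∈ T, orbitSetoid gs x (g x))
    (h₂ : ∀ g ∈ gs, ∀ x ∈ T, orbitSetoid fs x (g x)) : orbitsIn fs T = orbitsIn gs T :=
  (orbitsIn_subset hfs hgs h₁ h₂).antisymm (orbitsIn_subset hgs hfs h₂ h₁)

theorem orbitCount_eq_ncard_classes (fs : Set (F → F)) :
    orbitCount fs = (orbitSetoid fs).classes.ncard :=
  Nat.card_congr (orbitSetoid fs).quotientEquivClasses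

theorem orbitCount_congr (h₁ : ∀ g ∈ fs, ∀ x, orbitSetoid gs x (g x))
    (h₂ : ∀ g ∈ gs, ∀ x, orbitSetoid fs x (g x)) : orbitCount fs = orbitCount gs := by
  rw [orbitCount, orbitCount, (orbitSetoid_le h₁).antisymm (orbitSetoid_le h₂)]

theorem orbitCount_congr_of_image_eq (h : ∀ x, (fun g : F → F => g x) '' fs = (· x) '' gs) :
    orbitCount fs = orbitCount gs := by
  refine orbitCount_congr (fun g hg x => ?_) fun g hg x => ?_
  · exact .rel _ _ ((h x).subset ⟨g, hg, rfl⟩)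
  · exact .rel _ _ ((h x).superset ⟨g, hg, rfl⟩)

theorem orbitCount_eq_ncard_orbitsIn_add [Finite F] (hT : IsInvariant fs T) :
    orbitCount fs = (orbitsIn fs T).ncard + (orbitsIn fs Tᶜ).ncard := by
  have hunion : (orbitSetoid fs).classes = orbitsIn fs T ∪ orbitsIn fs Tᶜ := by
    refine Set.Subset.antisymm ?_ (Set.union_subset (Set.sep_subset _ _) (Set.sep_subset _ _))
    rintro _ ⟨x, rfl⟩
    by_cases hx : x ∈ T
    · exact .inl ⟨⟨x, rfl⟩, fun y hy => (hT.mem_iff_of_orbitSetoid hy).2 hx⟩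
    · exact .inr ⟨⟨x, rfl⟩, fun y hy => (hT.compl.mem_iff_of_orbitSetoid hy).2 hx⟩
  have hdisj : Disjoint (orbitsIn fs T) (orbitsIn fs Tᶜ) := by
    rw [Set.disjoint_left]
    rintro _ ⟨⟨x, rfl⟩, hxT⟩ ⟨-, hxT'⟩
    exact hxT' (.refl x) (hxT (.refl x))
  rw [orbitCount_eq_ncard_classes, hunion, Set.ncard_union_eq hdisj]

theorem sUnion_orbitsIn (hT : IsInvariant fs T) : ⋃₀ orbitsIn fs T = T := by
  refine (Set.sUnion_subset fun s hs => hs.2).antisymm fun x hx => ?_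
  exact ⟨_, ⟨⟨x, rfl⟩, fun y hy => (hT.mem_iff_of_orbitSetoid hy).2 hx⟩, .refl x⟩

theorem setOf_orbitSetoid_singleton {a : F → F} (ha : Function.Involutive a) (x : F) :
    {y | orbitSetoid {a} y x} = {x, a x} := by
  have hinv : IsInvariant {a} {x, a x} := by
    rintro _ rfl y
    simp only [Set.mem_insert_iff, Set.mem_singleton_iff, ha.injective.eq_iff, ha.eq_iff,
      or_comm]
  ext y
  constructor
  · exact fun hy => (hinv.mem_iff_of_orbitSetoid hy).2 (.inl rfl)
  · rintro (rfl | rfl)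
    · exact .refl _
    · exact .symm _ _ (orbitSetoid_apply (Set.mem_singleton a) x)

theorem two_mul_ncard_orbitsIn_singleton [Finite F] {a : F → F} (ha : Function.Involutive a)
    (hfix : ∀ x, a x ≠ x) (hT : IsInvariant {a} T) : 2 * (orbitsIn {a} T).ncard = T.ncard := by
  have hdisj : (orbitsIn {a} T).PairwiseDisjoint id :=
    (Setoid.isPartition_classes _).pairwiseDisjoint.subset (Set.sep_subset _ _)
  have htwo : ∀ s ∈ orbitsIn {a} T, s.ncard = 2 := by
    rintro _ ⟨⟨x, rfl⟩, -⟩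
    rw [setOf_orbitSetoid_singleton ha, Set.ncard_pair (hfix x).symm]
  calc 2 * (orbitsIn {a} T).ncard = ∑ᶠ s ∈ orbitsIn {a} T, s.ncard := by
        rw [finsum_mem_congr rfl htwo, ← finsum_one, mul_finsum_mem, mul_one]
    _ = (⋃ s ∈ orbitsIn {a} T, s).ncard :=
        (Set.Finite.ncard_biUnion (Set.toFinite _) (fun s _ => s.toFinite) hdisj).symm
    _ = T.ncard := by rw [← Set.sUnion_eq_biUnion, sUnion_orbitsIn hT]

end Orbits

section Sign

open Equiv.Perm

variable {α : Type*} [Fintype α] [DecidableEq α]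

theorem card_quotient_sameCycle (p : Equiv.Perm α) :
    Nat.card (Quotient (SameCycle.setoid p)) =
      p.cycleType.card + Fintype.card (Function.fixedPoints p) := by
  let label (x : α) : p.cycleFactorsFinset ⊕ Function.fixedPoints p :=
    if hx : p x = x then .inr ⟨x, hx⟩
    else .inl ⟨p.cycleOf x, cycleOf_mem_cycleFactorsFinset_iff.2 (mem_support.2 hx)⟩
  have hker : SameCycle.setoid p = Setoid.ker label := by
    ext x y
    change p.SameCycle x y ↔ label x = label y
    by_cases hx : p x = x <;> by_cases hy : p y = y
    · simp only [label, hx, hy, dif_pos, Sum.inr.injEq]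
      exact ⟨fun h => Subtype.ext (h.eq_of_left hx), fun h => Subtype.mk.inj h ▸ .refl p x⟩
    · simpa [label, hx, hy] using fun h : p.SameCycle x y => hy (h.apply_eq_self_iff.1 hx)
    · simpa [label, hx, hy] using fun h : p.SameCycle x y => hx (h.apply_eq_self_iff.2 hy)
    · simpa [label, hx, hy] using
        sameCycle_iff_cycleOf_eq_of_mem_support (mem_support.2 hx) (mem_support.2 hy)
  have hsurj : Function.Surjective label := by
    rintro (⟨c, hc⟩ | ⟨x, hx⟩)
    · obtain ⟨x, hx⟩ := (mem_cycleFactorsFinset_iff.1 hc).1.nonempty_support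
      have hpx : p x ≠ x := mem_support.1 (mem_cycleFactorsFinset_support_le hc hx)
      exact ⟨x, by simp [label, hpx, cycle_is_cycleOf hx hc]⟩
    · exact ⟨x, dif_pos hx⟩
  rw [hker, Nat.card_congr (Setoid.quotientKerEquivOfSurjective label hsurj), Nat.card_sum,
    Nat.card_eq_fintype_card, Nat.card_eq_fintype_card, Fintype.card_coe, cycleType_def,
    Multiset.card_map, Finset.card_val]

theorem sign_eq_neg_one_pow_card_quotient_sameCycle (p : Equiv.Perm α) :
    sign p = (-1) ^ (Nat.card (Quotient (SameCycle.setoid p)) + Nat.card α) := by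
  have hfixed := card_fixedPoints p
  have hsum := sum_cycleType_le p
  rw [sign_of_cycleType, card_quotient_sameCycle, Nat.card_eq_fintype_card]
  exact neg_one_pow_congr (by grind)

end Sign

section Orientation

variable {F : Type*} {P : Set F} {a b c : F → F}

/-- An orientation-reversing involution, where the orientation is recorded by the set `P` of
positive flags. -/
structure IsReversing (P : Set F) (a : F → F) : Prop where
  involutive : Function.Involutive a
  apply_mem_iff : ∀ x, a x ∈ P ↔ x ∉ P

namespace IsReversing

/-- The permutation `x ↦ a (b x)` of the positive flags induced by two orientation-reversing
involutions. -/
def mulPerm (ha : IsReversing P a) (hb : IsReversing P b) : Equiv.Perm P :=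
  (ha.involutive.toPerm * hb.involutive.toPerm).subtypePerm fun x => by
    simp [ha.apply_mem_iff, hb.apply_mem_iff]

theorem coe_mulPerm_apply (ha : IsReversing P a) (hb : IsReversing P b) (x : P) :
    (mulPerm ha hb x : F) = a (b x) :=
  rfl

theorem mulPerm_mul_mulPerm_mul_mulPerm (ha : IsReversing P a) (hb : IsReversing P b)
    (hc : IsReversing P c) : mulPerm ha hb * mulPerm hb hc * mulPerm hc ha = 1 := by
  ext x
  simp [coe_mulPerm_apply, ha.involutive _, hb.involutive _, hc.involutive _]

/-- The representative of `{x, b x}` lying among the positive flags. -/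
noncomputable def toPositive (hb : IsReversing P b) (x : F) : P :=
  if hx : x ∈ P then ⟨x, hx⟩ else ⟨b x, (hb.apply_mem_iff x).2 hx⟩

theorem coe_toPositive_of_mem (hb : IsReversing P b) {x : F} (hx : x ∈ P) :
    (hb.toPositive x : F) = x := by
  rw [toPositive, dif_pos hx]

theorem coe_toPositive_of_notMem (hb : IsReversing P b) {x : F} (hx : x ∉ P) :
    (hb.toPositive x : F) = b x := by
  rw [toPositive, dif_neg hx]

theorem sameCycle_toPositive_apply_left (ha : IsReversing P a) (hb : IsReversing P b) (x : F) :
    (mulPerm ha hb).SameCycle (hb.toPositive x) (hb.toPositive (a x)) := by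
  by_cases hx : x ∈ P
  · have hax : a x ∉ P := fun h => (ha.apply_mem_iff x).1 h hx
    refine .symm ⟨1, Subtype.ext ?_⟩
    rw [zpow_one, coe_mulPerm_apply, coe_toPositive_of_notMem hb hax, coe_toPositive_of_mem hb hx,
      hb.involutive, ha.involutive]
  · refine ⟨1, Subtype.ext ?_⟩
    rw [zpow_one, coe_mulPerm_apply, coe_toPositive_of_notMem hb hx,
      coe_toPositive_of_mem hb ((ha.apply_mem_iff x).2 hx), hb.involutive]

theorem toPositive_apply (hb : IsReversing P b) (x : F) :
    hb.toPositive (b x) = hb.toPositive x := by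
  apply Subtype.ext
  by_cases hx : x ∈ P
  · have hbx : b x ∉ P := fun h => (hb.apply_mem_iff x).1 h hx
    rw [coe_toPositive_of_notMem hb hbx, coe_toPositive_of_mem hb hx, hb.involutive]
  · rw [coe_toPositive_of_mem hb ((hb.apply_mem_iff x).2 hx), coe_toPositive_of_notMem hb hx]

theorem sameCycle_mulPerm_iff [Finite F] (ha : IsReversing P a) (hb : IsReversing P b) {x y : P} :
    (mulPerm ha hb).SameCycle x y ↔ orbitSetoid {a, b} (x : F) y := by
  constructor
  · intro hxy
    obtain ⟨n, rfl⟩ := hxy.exists_nat_pow_eq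
    clear hxy
    induction n with
    | zero => exact .refl _
    | succ n ih =>
      rw [pow_succ', Equiv.Perm.mul_apply, coe_mulPerm_apply]
      exact .trans _ _ _ ih (.trans _ _ _ (orbitSetoid_apply (by simp) _)
        (orbitSetoid_apply (by simp) _))
  · have hle : orbitSetoid {a, b} ≤
        (Equiv.Perm.SameCycle.setoid (mulPerm ha hb)).comap hb.toPositive := by
      refine orbitSetoid_le ?_
      rintro g (rfl | rfl) z
      · exact sameCycle_toPositive_apply_left ha hb z
      · rw [Setoid.comap_rel, hb.toPositive_apply]
    intro hxy
    have hpos (z : P) : hb.toPositive z = z := Subtype.ext (coe_toPositive_of_mem hb z.2)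
    have hcycle : (mulPerm ha hb).SameCycle (hb.toPositive x) (hb.toPositive y) := hle hxy
    rwa [hpos, hpos] at hcycle

theorem orbitCount_pair [Finite F] (ha : IsReversing P a) (hb : IsReversing P b) :
    orbitCount {a, b} = Nat.card (Quotient (Equiv.Perm.SameCycle.setoid (mulPerm ha hb))) := by
  let orbitOf (x : P) : Quotient (orbitSetoid {a, b}) := ⟦(x : F)⟧
  have hker : Equiv.Perm.SameCycle.setoid (mulPerm ha hb) = Setoid.ker orbitOf :=
    Setoid.ext fun x y => (sameCycle_mulPerm_iff ha hb).trans Quotient.eq.symm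
  have hsurj : Function.Surjective orbitOf := by
    refine Quotient.ind fun x => ⟨hb.toPositive x, Quotient.sound ?_⟩
    by_cases hx : x ∈ P
    · rw [coe_toPositive_of_mem hb hx]
    · rw [coe_toPositive_of_notMem hb hx]
      exact .symm _ _ (orbitSetoid_apply (by simp) x)
  rw [hker, Nat.card_congr (Setoid.quotientKerEquivOfSurjective orbitOf hsurj), orbitCount]

theorem sign_mulPerm [Fintype F] (ha : IsReversing P a) (hb : IsReversing P b) :
    Equiv.Perm.sign (mulPerm ha hb) = (-1) ^ (orbitCount {a, b} + P.ncard) := by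
  rw [sign_eq_neg_one_pow_card_quotient_sameCycle, orbitCount_pair ha hb, Nat.card_coe_set_eq]

theorem even_orbitCount_add [Finite F] (ha : IsReversing P a) (hb : IsReversing P b)
    (hc : IsReversing P c) :
    Even (orbitCount {a, b} + orbitCount {b, c} + orbitCount {c, a} + P.ncard) := by
  have := Fintype.ofFinite F
  have hsign := congrArg Equiv.Perm.sign (mulPerm_mul_mulPerm_mul_mulPerm ha hb hc)
  rw [map_mul, map_mul, map_one, sign_mulPerm, sign_mulPerm, sign_mulPerm, ← pow_add, ← pow_add,
    neg_one_pow_eq_one_iff_even (by decide)] at hsign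
  grind

theorem card_eq_two_mul_ncard [Finite F] (ha : IsReversing P a) : Nat.card F = 2 * P.ncard := by
  have hcompl : a ⁻¹' P = Pᶜ := Set.ext ha.apply_mem_iff
  rw [← Set.ncard_add_ncard_compl P, ← hcompl,
    Set.ncard_preimage_of_injective_subset_range ha.involutive.injective
      fun x _ => ha.involutive.surjective x, two_mul]

end IsReversing

variable {H : PreHypermap F}

theorem Orientable.exists_isReversing (hH : H.IsHypermap) (hor : H.Orientable) :
    ∃ P : Set F, ∀ i, IsReversing P (H.theta i) := by
  obtain ⟨o, ho, hneg⟩ := hor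
  refine ⟨{x | o x = 1}, fun i => ⟨(hH i).1, fun x => ?_⟩⟩
  change o (H.theta i x) = 1 ↔ ¬o x = 1
  have := ho x
  rw [hneg]
  omega

theorem Orientable.even_eulerGenus [Finite F] (hH : H.IsHypermap) (hor : H.Orientable) :
    Even H.eulerGenus := by
  obtain ⟨P, hP⟩ := hor.exists_isReversing hH
  have hparity := (hP 1).even_orbitCount_add (hP 2) (hP 0)
  have hcard := (hP 0).card_eq_two_mul_ncard
  rw [Set.pair_comm (H.theta 2)] at hparity
  change Even (H.v + H.e + H.f + P.ncard) at hparity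
  rw [eulerGenus, chi, Int.even_iff]
  rw [Nat.even_iff] at hparity
  omega

end Orientation

section PartialDual

variable {F : Type*} {H : PreHypermap F} {S : Set F} {A : Set (Set F)}

theorem edges_eq_classes (H : PreHypermap F) :
    H.edges = (orbitSetoid {H.theta 0, H.theta 2}).classes := by
  have hclass (x : F) : {y | orbitRel {H.theta 0, H.theta 2} x y} =
      {y | orbitSetoid {H.theta 0, H.theta 2} y x} :=
    Set.ext fun y => ⟨.symm _ _, .symm _ _⟩
  simp only [edges, Setoid.classes, hclass]

theorem e_eq_ncard_edges (H : PreHypermap F) : H.e = H.edges.ncard := by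
  rw [edges_eq_classes, e, orbitCount_eq_ncard_classes]

theorem isInvariant_sUnion (hA : A ⊆ H.edges) :
    IsInvariant {H.theta 0, H.theta 2} (⋃₀ A) := by
  rw [edges_eq_classes] at hA
  refine fun g hg x => exists_congr fun s => and_congr_right fun hs => ?_
  obtain ⟨z, rfl⟩ := hA hs
  have hx := orbitSetoid_apply hg x
  exact ⟨fun h => .trans _ _ _ hx h, fun h => .trans _ _ _ (.symm _ _ hx) h⟩

theorem orbitsIn_sUnion (hA : A ⊆ H.edges) :
    orbitsIn {H.theta 0, H.theta 2} (⋃₀ A) = A := by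
  rw [edges_eq_classes] at hA
  refine Set.Subset.antisymm ?_ fun s hs => ⟨hA hs, Set.subset_sUnion_of_mem hs⟩
  rintro _ ⟨⟨x, rfl⟩, hsub⟩
  obtain ⟨t, ht, hxt⟩ := hsub (.refl x)
  rwa [Setoid.eq_of_mem_classes ⟨x, rfl⟩ (Setoid.refl' _ x) (hA ht) hxt]

theorem sUnion_edges_sdiff (hA : A ⊆ H.edges) : ⋃₀ (H.edges \ A) = (⋃₀ A)ᶜ := by
  have hpart : Setoid.IsPartition H.edges := edges_eq_classes H ▸ Setoid.isPartition_classes _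
  have hdisj : (H.edges ∪ A).PairwiseDisjoint id := by
    rw [Set.union_eq_left.2 hA]
    exact hpart.pairwiseDisjoint
  simpa only [id, ← Set.sUnion_eq_biUnion, hpart.sUnion_eq_univ, ← Set.compl_eq_univ_sdiff] using
    (Set.biUnion_sdiff_biUnion_eq hdisj).symm

theorem pdual_theta_zero (H : PreHypermap F) (S : Set F) :
    (H.pdual S).theta 0 = S.piecewise (H.theta 2) (H.theta 0) :=
  rfl

theorem pdual_theta_one (H : PreHypermap F) (S : Set F) : (H.pdual S).theta 1 = H.theta 1 :=
  rfl

theorem pdual_theta_two (H : PreHypermap F) (S : Set F) :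
    (H.pdual S).theta 2 = S.piecewise (H.theta 0) (H.theta 2) :=
  rfl

theorem IsInvariant.involutive_piecewise {f g : F → F} (hS : IsInvariant {f, g} S)
    (hf : Function.Involutive f) (hg : Function.Involutive g) :
    Function.Involutive (S.piecewise f g) := by
  intro x
  by_cases hx : x ∈ S
  · rw [Set.piecewise_eq_of_mem _ _ _ hx,
      Set.piecewise_eq_of_mem _ _ _ ((hS f (.inl rfl) x).2 hx), hf]
  · rw [Set.piecewise_eq_of_notMem _ _ _ hx,
      Set.piecewise_eq_of_notMem _ _ _ (mt (hS g (.inr rfl) x).1 hx), hg]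

theorem IsHypermap.pdual (hH : H.IsHypermap) (hS : IsInvariant {H.theta 0, H.theta 2} S) :
    (H.pdual S).IsHypermap := by
  have hS' : IsInvariant {H.theta 2, H.theta 0} S := Set.pair_comm (H.theta 0) _ ▸ hS
  intro i
  refine ⟨?_, fun x => ?_⟩
  · fin_cases i
    exacts [hS'.involutive_piecewise (hH 2).1 (hH 0).1, (hH 1).1,
      hS.involutive_piecewise (hH 0).1 (hH 2).1]
  · dsimp only [PreHypermap.pdual]
    split_ifs
    exacts [(hH _).2 x, (hH _).2 x, (hH _).2 x]

theorem Orientable.pdual (hor : H.Orientable) (S : Set F) : (H.pdual S).Orientable := by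
  obtain ⟨o, ho, hneg⟩ := hor
  refine ⟨o, ho, fun i x => ?_⟩
  dsimp only [PreHypermap.pdual]
  split_ifs <;> exact hneg _ x

theorem e_pdual (H : PreHypermap F) (S : Set F) : (H.pdual S).e = H.e := by
  refine orbitCount_congr_of_image_eq fun x => ?_
  by_cases hx : x ∈ S <;>
    simp [pdual_theta_zero, pdual_theta_two, hx, Set.image_insert_eq, Set.pair_comm]

theorem c_pdual (H : PreHypermap F) (S : Set F) : (H.pdual S).c = H.c := by
  refine orbitCount_congr_of_image_eq fun x => ?_
  by_cases hx : x ∈ S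
  · simp only [pdual_theta_zero, pdual_theta_one, pdual_theta_two, Set.image_insert_eq,
      Set.image_singleton, Set.piecewise_eq_of_mem _ _ _ hx]
    rw [Set.pair_comm, Set.insert_comm, Set.pair_comm (H.theta 2 x)]
  · simp [pdual_theta_zero, pdual_theta_one, pdual_theta_two, hx, Set.image_insert_eq]

theorem f_pdual (H : PreHypermap F) (S : Set F) : (H.pdual S).f = (H.pdual Sᶜ).v := by
  rw [f, v, pdual_theta_zero, pdual_theta_one, pdual_theta_one, pdual_theta_two,
    Set.piecewise_compl, Set.pair_comm]

/-- The spanning sub-hypermap of `H` determined by the hyperedges inside `S`, as a hypermap on all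
flags: every hyperedge outside `S` is replaced by the two-flag hyperedges `{x, θ₂ x}`. -/
noncomputable def spanningSub (H : PreHypermap F) (S : Set F) : PreHypermap F where
  theta := ![S.piecewise (H.theta 0) (H.theta 2), H.theta 1, H.theta 2]

theorem spanningSub_theta_zero_of_mem (H : PreHypermap F) {x : F} (hx : x ∈ S) :
    (H.spanningSub S).theta 0 x = H.theta 0 x :=
  Set.piecewise_eq_of_mem _ _ _ hx

theorem spanningSub_theta_zero_of_notMem (H : PreHypermap F) {x : F} (hx : x ∉ S) :
    (H.spanningSub S).theta 0 x = H.theta 2 x :=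
  Set.piecewise_eq_of_notMem _ _ _ hx

theorem IsHypermap.spanningSub (hH : H.IsHypermap)
    (hS : IsInvariant {H.theta 0, H.theta 2} S) : (H.spanningSub S).IsHypermap := by
  have hθ := hS.involutive_piecewise (hH 0).1 (hH 2).1
  have hfix (x : F) : S.piecewise (H.theta 0) (H.theta 2) x ≠ x := by
    rw [Set.piecewise]
    split_ifs
    exacts [(hH 0).2 x, (hH 2).2 x]
  intro i
  fin_cases i
  exacts [⟨hθ, hfix⟩, hH 1, hH 2]

theorem Orientable.spanningSub (hor : H.Orientable) (S : Set F) :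
    (H.spanningSub S).Orientable := by
  obtain ⟨o, ho, hneg⟩ := hor
  refine ⟨o, ho, fun i x => ?_⟩
  fin_cases i
  · change o (S.piecewise (H.theta 0) (H.theta 2) x) = -o x
    rw [Set.piecewise]
    split_ifs <;> exact hneg _ x
  exacts [hneg 1 x, hneg 2 x]

theorem v_spanningSub (H : PreHypermap F) (S : Set F) : (H.spanningSub S).v = H.v :=
  rfl

theorem f_spanningSub (H : PreHypermap F) (S : Set F) :
    (H.spanningSub S).f = (H.pdual S).v := by
  rw [v, Set.pair_comm]
  rfl

theorem c_spanningSub (H : PreHypermap F) (A : Set (Set F)) :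
    (H.spanningSub (⋃₀ A)).c = H.subc A := by
  refine orbitCount_congr ?_ ?_
  · rintro g (rfl | rfl | rfl) x
    · by_cases hx : x ∈ ⋃₀ A
      · refine .rel _ _ ⟨_, .inr (.inr rfl), ?_⟩
        exact (if_pos hx).trans (H.spanningSub_theta_zero_of_mem hx).symm
      · refine .rel _ _ ⟨H.theta 2, .inr (.inl rfl), ?_⟩
        exact (H.spanningSub_theta_zero_of_notMem hx).symm
    · exact orbitSetoid_apply (.inl rfl) x
    · exact orbitSetoid_apply (.inr (.inl rfl)) x
  · rintro g (rfl | rfl | rfl) x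
    · exact orbitSetoid_apply (.inr (.inl rfl)) x
    · exact orbitSetoid_apply (.inr (.inr rfl)) x
    · by_cases hx : x ∈ ⋃₀ A
      · refine .rel _ _ ⟨_, .inl rfl, ?_⟩
        exact (H.spanningSub_theta_zero_of_mem hx).trans (if_pos hx).symm
      · simp only [if_neg hx]
        exact .refl x

theorem IsInvariant.spanningSub (hS : IsInvariant {H.theta 0, H.theta 2} S) :
    IsInvariant {(H.spanningSub S).theta 0, (H.spanningSub S).theta 2} S := by
  rintro g (rfl | rfl) x
  · change S.piecewise (H.theta 0) (H.theta 2) x ∈ S ↔ x ∈ S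
    rw [Set.piecewise]
    split_ifs
    exacts [hS _ (.inl rfl) x, hS _ (.inr rfl) x]
  · exact hS _ (.inr rfl) x

theorem orbitsIn_spanningSub (hS : IsInvariant {H.theta 0, H.theta 2} S) :
    orbitsIn {(H.spanningSub S).theta 0, (H.spanningSub S).theta 2} S =
      orbitsIn {H.theta 0, H.theta 2} S := by
  refine orbitsIn_congr hS.spanningSub hS ?_ ?_
  · rintro g (rfl | rfl) x hx
    · exact .rel _ _ ⟨_, .inl rfl, (H.spanningSub_theta_zero_of_mem hx).symm⟩
    · exact orbitSetoid_apply (.inr rfl) x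
  · rintro g (rfl | rfl) x hx
    · exact .rel _ _ ⟨_, .inl rfl, H.spanningSub_theta_zero_of_mem hx⟩
    · exact orbitSetoid_apply (.inr rfl) x

theorem orbitsIn_spanningSub_compl (hS : IsInvariant {H.theta 0, H.theta 2} S) :
    orbitsIn {(H.spanningSub S).theta 0, (H.spanningSub S).theta 2} Sᶜ =
      orbitsIn {H.theta 2} Sᶜ := by
  refine orbitsIn_congr hS.spanningSub.compl (hS.mono (by simp)).compl ?_ ?_
  · rintro g (rfl | rfl) x hx
    · exact .rel _ _ ⟨_, rfl, (H.spanningSub_theta_zero_of_notMem hx).symm⟩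
    · exact orbitSetoid_apply (Set.mem_singleton _) x
  · rintro g rfl x -
    exact orbitSetoid_apply (.inr rfl) x

theorem two_mul_e_spanningSub [Finite F] (hH : H.IsHypermap) (hA : A ⊆ H.edges) :
    2 * (H.spanningSub (⋃₀ A)).e = 2 * A.ncard + (⋃₀ A)ᶜ.ncard := by
  have hS := isInvariant_sUnion hA
  have hS₂ : IsInvariant {H.theta 2} (⋃₀ A)ᶜ := (hS.mono (by simp)).compl
  rw [e, orbitCount_eq_ncard_orbitsIn_add hS.spanningSub, orbitsIn_spanningSub hS,
    orbitsIn_spanningSub_compl hS, orbitsIn_sUnion hA, mul_add,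
    two_mul_ncard_orbitsIn_singleton (hH 2).1 (hH 2).2 hS₂]

theorem IsHypermap.even_ncard [Finite F] (hH : H.IsHypermap)
    {i : Fin 3} (hS : IsInvariant {H.theta i} S) : Even S.ncard := by
  rw [← two_mul_ncard_orbitsIn_singleton (hH i).1 (hH i).2 hS]
  exact even_two_mul _

theorem subeps_eq_eulerGenus_spanningSub [Finite F] (hH : H.IsHypermap) (hA : A ⊆ H.edges) :
    H.subeps A = (H.spanningSub (⋃₀ A)).eulerGenus := by
  have hedge := two_mul_e_spanningSub hH hA
  have hcard := Set.ncard_add_ncard_compl (⋃₀ A)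
  obtain ⟨m, hm⟩ := hH.even_ncard (i := 2) ((isInvariant_sUnion hA).mono (by simp))
  rw [subeps, subchi, subf, eulerGenus, chi, v_spanningSub, f_spanningSub, c_spanningSub]
  omega

theorem eulerGenus_pdual [Finite F] (hH : H.IsHypermap) (hA : A ⊆ H.edges) :
    (H.pdual (⋃₀ A)).eulerGenus = H.subeps A + H.subeps (H.edges \ A) +
      2 * ((H.c : ℤ) - H.subc A - H.subc (H.edges \ A) + H.v) := by
  have hedges : (H.edges \ A).ncard + A.ncard = H.e := by
    rw [e_eq_ncard_edges, Set.ncard_sdiff_add_ncard_of_subset hA]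
  have hflags := Set.ncard_add_ncard_compl (⋃₀ A)
  obtain ⟨m, hm⟩ := hH.even_ncard (i := 2) ((isInvariant_sUnion hA).mono (by simp))
  rw [subeps, subeps, subchi, subchi, subf, subf, sUnion_edges_sdiff hA, ← f_pdual,
    eulerGenus, chi, c_pdual, e_pdual]
  omega

end PartialDual
end PreHypermap

open PreHypermap in
theorem statement_2_general {F : Type*} [Finite F] (H : PreHypermap F)
    (hH : H.IsHypermap) (hor : H.Orientable) (A : Set (Set F)) (hA : A ⊆ H.edges) :
    Even (H.pdual (⋃₀ A)).eulerGenus ∧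
    Even (H.subeps A) ∧ Even (H.subeps (H.edges \ A)) ∧
    (H.pdual (⋃₀ A)).eulerGenus / 2 =
      H.subeps A / 2 + H.subeps (H.edges \ A) / 2
        + (H.c : ℤ) - (H.subc A : ℤ) - (H.subc (H.edges \ A) : ℤ) + (H.v : ℤ) := by
  have hdual : Even (H.pdual (⋃₀ A)).eulerGenus :=
    (hor.pdual _).even_eulerGenus (hH.pdual (isInvariant_sUnion hA))
  have hsub {B : Set (Set F)} (hB : B ⊆ H.edges) : Even (H.subeps B) := by
    rw [subeps_eq_eulerGenus_spanningSub hH hB]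
    exact (hor.spanningSub _).even_eulerGenus (hH.spanningSub (isInvariant_sUnion hB))
  have hA_even := hsub hA
  have hAc_even := hsub (Set.sdiff_subset : H.edges \ A ⊆ H.edges)
  refine ⟨hdual, hA_even, hAc_even, ?_⟩
  rw [eulerGenus_pdual hH hA]
  obtain ⟨m, hm⟩ := hA_even
  omega

open PreHypermap in
/-- Orientable-genus formula for the partial dual: `ε(H^A)`, `ε(A)`, `ε(A^c)` are even and
`γ(H^A) = γ(A) + γ(A^c) + c(H) - c(A) - c(A^c) + v(H)`, where `γ = ε / 2`. -/
theorem statement_2 {F : Type} [Fintype F] (H : PreHypermap F)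
    (hH : H.IsHypermap) (hconn : H.Connected) (hor : H.Orientable)
    (A : Set (Set F)) (hA : A ⊆ H.edges) :
    Even (H.pdual (⋃₀ A)).eulerGenus ∧
    Even (H.subeps A) ∧ Even (H.subeps (H.edges \ A)) ∧
    (H.pdual (⋃₀ A)).eulerGenus / 2 =
      H.subeps A / 2 + H.subeps (H.edges \ A) / 2
        + (H.c : ℤ) - (H.subc A : ℤ) - (H.subc (H.edges \ A) : ℤ) + (H.v : ℤ) := by
  exact statement_2_general H hH hor A hA
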